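/- For 0 < β < 1 and any r > −1, the moments of the M-Wright function satisfy ∫_0^∞ τ^r M_β(τ) dτ = Γ(r+1)/Γ(βr+1). -/

import Mathlib

/-!
Let `J θ a` be the integral of `e ^ σ * σ ^ (-a)` along the ray from `1` in a direction `θ` with
`π / 2 < θ < π`. Hankel's formula says `im (J θ a) = π / Γ(a)`: for `a ≤ -1` the ray may be moved
to start at `0`, where the integral is a rotated Gamma integral, and integration by parts together
with continuity in `a` gives all other `a`. Expanding `e ^ (-σ ^ β τ)` shows that `π M_β(τ)` is the
imaginary part of the integral of `e ^ σ * σ ^ (β - 1) * e ^ (-σ ^ β τ)`. If moreover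
`β θ < π / 2`, the real part of `σ ^ β` is bounded below by a positive constant on the ray, so
Fubini's theorem applies; the integral over `τ` is a Gamma integral and what remains is Hankel's
formula for `a = β r + 1`.
-/

open MeasureTheory

/-- The M-Wright function `M_β(z) = ∑ (-z)ⁿ/(n! Γ(-βn+1-β))`. -/
noncomputable def mWright (β : ℝ) (z : ℝ) : ℝ :=
  ∑' n : ℕ, (-z) ^ n / (n.factorial * Real.Gamma (-β * n + 1 - β))

section

open Asymptotics Complex Filter Set Topology
open scoped Real

lemma norm_exp_neg_mul_ofReal (ζ : ℂ) (t : ℝ) : ‖exp (-(ζ * t))‖ = Real.exp (-(ζ.re * t)) := by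
  rw [norm_exp, neg_re, re_mul_ofReal]

lemma aestronglyMeasurable_mul_exp_neg {f : ℝ → ℂ}
    (hf : ∀ b : ℝ, 0 < b → IntegrableOn (fun t ↦ f t * exp (-(b * t))) (Ioi 0)) (ζ : ℂ) :
    AEStronglyMeasurable (fun t : ℝ ↦ f t * exp (-(ζ * t))) (volume.restrict (Ioi 0)) := by
  have hexp : Continuous fun t : ℝ ↦ exp ((1 - ζ) * t) := by fun_prop
  refine ((hf 1 one_pos).aestronglyMeasurable.mul hexp.aestronglyMeasurable).congr
    (.of_forall fun t ↦ ?_)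
  rw [Pi.mul_apply, mul_assoc, ← exp_add]
  congr 2
  push_cast
  ring

lemma norm_ofReal_mul_exp_neg_le {κ t : ℝ} {ζ : ℂ} (hκ : 0 < κ) (hζ : 2 * κ ≤ ζ.re)
    (ht : 0 ≤ t) : ‖t * exp (-(ζ * t))‖ ≤ κ⁻¹ * ‖exp (-(κ * t))‖ := by
  have ht_le : t ≤ κ⁻¹ * Real.exp (κ * t) := by
    rw [inv_mul_eq_div, le_div_iff₀' hκ]
    linarith [Real.add_one_le_exp (κ * t)]
  rw [norm_mul, norm_exp_neg_mul_ofReal, norm_exp_neg_mul_ofReal, ofReal_re, norm_real,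
    Real.norm_of_nonneg ht]
  calc t * Real.exp (-(ζ.re * t))
      ≤ κ⁻¹ * Real.exp (κ * t) * Real.exp (-(2 * κ * t)) := by gcongr
    _ = κ⁻¹ * Real.exp (-(κ * t)) := by
      rw [mul_assoc, ← Real.exp_add]
      ring_nf

lemma differentiableOn_integral_mul_exp_neg {f : ℝ → ℂ}
    (hf : ∀ b : ℝ, 0 < b → IntegrableOn (fun t ↦ f t * exp (-(b * t))) (Ioi 0)) :
    DifferentiableOn ℂ (fun ζ : ℂ ↦ ∫ t in Ioi (0 : ℝ), f t * exp (-(ζ * t))) {ζ | 0 < ζ.re} := by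
  intro ζ (hζ : 0 < ζ.re)
  have hmeas := aestronglyMeasurable_mul_exp_neg hf
  have hnhds : {ξ : ℂ | ζ.re / 2 < ξ.re} ∈ 𝓝 ζ :=
    (isOpen_lt continuous_const continuous_re).mem_nhds (half_lt_self hζ)
  have hmeas' : AEStronglyMeasurable (fun t : ℝ ↦ f t * (-t * exp (-(ζ * t))))
      (volume.restrict (Ioi 0)) := by
    refine ((hmeas ζ).mul continuous_ofReal.neg.aestronglyMeasurable).congr
      (.of_forall fun t ↦ ?_)
    simp only [Pi.mul_apply, Pi.neg_apply]
    ring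
  refine (hasDerivAt_integral_of_dominated_loc_of_deriv_le
    (F := fun ξ t ↦ f t * exp (-(ξ * t))) (F' := fun ξ t ↦ f t * (-t * exp (-(ξ * t))))
    (bound := fun t ↦ (ζ.re / 4)⁻¹ * ‖f t * exp (-((ζ.re / 4 : ℝ) * t))‖)
    hnhds (.of_forall hmeas) ?_ hmeas' ?_ ((hf _ (by positivity)).norm.const_mul _)
    ?_).2.differentiableAt.differentiableWithinAt
  · refine Integrable.mono (hf _ hζ) (hmeas ζ) (.of_forall fun t ↦ ?_)
    rw [norm_mul, norm_mul, norm_exp_neg_mul_ofReal, norm_exp_neg_mul_ofReal, ofReal_re]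
  · filter_upwards [ae_restrict_mem measurableSet_Ioi] with t ht ξ hξ
    have hξ' : 2 * (ζ.re / 4) ≤ ξ.re := by linarith [show ζ.re / 2 < ξ.re from hξ]
    rw [neg_mul, mul_neg, norm_neg, norm_mul, norm_mul (f t), mul_left_comm]
    exact mul_le_mul_of_nonneg_left
      (norm_ofReal_mul_exp_neg_le (by positivity) hξ' (le_of_lt ht)) (norm_nonneg _)
  · refine .of_forall fun t ξ _ ↦ ?_
    have hlin : HasDerivAt (fun ξ : ℂ ↦ -(ξ * t)) (-(t : ℂ)) ξ := by
      simpa using ((hasDerivAt_id ξ).mul_const (t : ℂ)).fun_neg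
    simpa only [mul_comm] using hlin.cexp.const_mul (f t)

lemma integrableOn_cpow_mul_exp_neg_mul_Ioi {a ζ : ℂ} (ha : 0 < a.re) (hζ : 0 < ζ.re) :
    IntegrableOn (fun t : ℝ ↦ (t : ℂ) ^ (a - 1) * exp (-(ζ * t))) (Ioi 0) := by
  have hreal : IntegrableOn (fun t : ℝ ↦ t ^ (a.re - 1) * Real.exp (-(ζ.re * t))) (Ioi 0) := by
    simpa using integrableOn_rpow_mul_exp_neg_mul_rpow (p := 1) (s := a.re - 1) (by linarith)
      one_pos hζ
  refine hreal.mono' (by fun_prop) ?_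
  filter_upwards [ae_restrict_mem measurableSet_Ioi] with t ht
  rw [norm_mul, norm_cpow_eq_rpow_re_of_pos ht, norm_exp_neg_mul_ofReal, sub_re, one_re]

-- Both sides are holomorphic in `ζ` and agree for real `ζ > 0`.
lemma integral_cpow_mul_exp_neg_mul_Ioi_of_re_pos {a ζ : ℂ} (ha : 0 < a.re) (hζ : 0 < ζ.re) :
    ∫ t in Ioi (0 : ℝ), (t : ℂ) ^ (a - 1) * exp (-(ζ * t)) = ζ ^ (-a) * Gamma a := by
  have hopen : IsOpen {ζ : ℂ | 0 < ζ.re} := isOpen_lt continuous_const continuous_re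
  have hleft := (differentiableOn_integral_mul_exp_neg fun b hb ↦
    integrableOn_cpow_mul_exp_neg_mul_Ioi ha (ζ := b) (by simpa using hb)).analyticOnNhd hopen
  have hright : AnalyticOnNhd ℂ (fun ζ : ℂ ↦ ζ ^ (-a) * Gamma a) {ζ | 0 < ζ.re} :=
    DifferentiableOn.analyticOnNhd (fun ξ hξ ↦ ((differentiableAt_id.cpow_const
      (Or.inl hξ)).mul_const _).differentiableWithinAt) hopen
  have hreal : ∀ᶠ b : ℝ in 𝓝[≠] 1, ∫ t in Ioi (0 : ℝ), (t : ℂ) ^ (a - 1) * exp (-((b : ℂ) * t)) =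
      (b : ℂ) ^ (-a) * Gamma a := by
    filter_upwards [nhdsWithin_le_nhds (lt_mem_nhds one_pos)] with b hb
    rw [integral_cpow_mul_exp_neg_mul_Ioi ha hb, one_div, cpow_neg, inv_cpow_ofReal_nonneg hb.le]
  have hofReal : Tendsto ((↑) : ℝ → ℂ) (𝓝[≠] 1) (𝓝[≠] 1) :=
    continuous_ofReal.continuousWithinAt.tendsto_nhdsWithin fun b hb ↦ by simpa using hb
  exact hleft.eqOn_of_preconnected_of_frequently_eq hright
    (convex_halfSpace_re_gt 0).isPreconnected (z₀ := 1) (by simp)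
    (hofReal.frequently hreal.frequently) hζ

lemma sin_pos_of_mem_Ioo_pi_div_two_pi {θ : ℝ} (hθ : θ ∈ Ioo (π / 2) π) : 0 < Real.sin θ :=
  Real.sin_pos_of_pos_of_lt_pi (Real.pi_div_two_pos.trans hθ.1) hθ.2

lemma cos_neg_of_mem_Ioo_pi_div_two_pi {θ : ℝ} (hθ : θ ∈ Ioo (π / 2) π) : Real.cos θ < 0 :=
  Real.cos_neg_of_pi_div_two_lt_of_lt hθ.1 (by linarith [hθ.2, Real.pi_pos])

/-- The point at distance `s` from the vertex `c` on the ray in direction `θ`. For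
`π / 2 < θ < π` this ray is the upper half of a Hankel contour; as the integrands below commute
with conjugation, the lower half only enters by taking imaginary parts. -/
noncomputable def hankelRay (θ c s : ℝ) : ℂ :=
  c + s * exp (θ * I)

section hankelRay

variable {θ c s : ℝ}

lemma hankelRay_zero_right : hankelRay θ c 0 = c := by
  simp [hankelRay]

lemma hankelRay_re : (hankelRay θ c s).re = c + s * Real.cos θ := by
  simp [hankelRay, exp_ofReal_mul_I_re]

lemma hankelRay_im : (hankelRay θ c s).im = s * Real.sin θ := by
  simp [hankelRay, exp_ofReal_mul_I_im]

lemma continuous_hankelRay : Continuous fun x : ℝ × ℝ ↦ hankelRay θ x.1 x.2 := by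
  unfold hankelRay
  fun_prop

lemma measurable_hankelRay : Measurable (hankelRay θ c) :=
  (continuous_hankelRay.comp (.prodMk_right c)).measurable

lemma hasDerivAt_hankelRay_vertex : HasDerivAt (fun c ↦ hankelRay θ c s) 1 c :=
  (hasDerivAt_id c).ofReal_comp.add_const _

lemma hasDerivAt_hankelRay : HasDerivAt (hankelRay θ c) (exp (θ * I)) s := by
  simpa only [ofReal_one, one_mul, id] using!
    ((hasDerivAt_id s).ofReal_comp.mul_const (exp (θ * I))).const_add (c : ℂ)

lemma norm_hankelRay_le (hs : 0 ≤ s) : ‖hankelRay θ c s‖ ≤ |c| + s := by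
  refine (norm_add_le _ _).trans_eq ?_
  rw [norm_mul, norm_exp_ofReal_mul_I, norm_real, norm_real, Real.norm_eq_abs,
    Real.norm_of_nonneg hs, mul_one]

lemma tendsto_norm_hankelRay (hθ : 0 < Real.sin θ) :
    Tendsto (fun s ↦ ‖hankelRay θ c s‖) atTop atTop := by
  refine tendsto_atTop_mono (fun s ↦ ?_) (tendsto_id.atTop_mul_const hθ)
  rw [id, ← hankelRay_im (c := c)]
  exact im_le_norm _

-- `c * sin θ` is the distance from the origin to the line carrying the ray.
lemma mul_sin_le_norm_hankelRay : c * Real.sin θ ≤ ‖hankelRay θ c s‖ := by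
  have him : (hankelRay θ c s * exp (-(θ * I))).im = -(c * Real.sin θ) := by
    rw [hankelRay, add_mul, mul_assoc, ← exp_add, add_neg_cancel, exp_zero, mul_one, add_im,
      ofReal_im, add_zero, im_ofReal_mul, ← neg_mul, ← ofReal_neg, exp_ofReal_mul_I_im,
      Real.sin_neg, mul_neg]
  calc c * Real.sin θ ≤ |(hankelRay θ c s * exp (-(θ * I))).im| := by
        rw [him, abs_neg]
        exact le_abs_self _
    _ ≤ ‖hankelRay θ c s * exp (-(θ * I))‖ := abs_im_le_norm _
    _ = ‖hankelRay θ c s‖ := by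
      rw [norm_mul, ← neg_mul, ← ofReal_neg, norm_exp_ofReal_mul_I, mul_one]

lemma hankelRay_mem_slitPlane (hθ : 0 < Real.sin θ) (hs : 0 ≤ s) (hcs : 0 < c + s) :
    hankelRay θ c s ∈ slitPlane := by
  rw [mem_slitPlane_iff, hankelRay_re, hankelRay_im]
  rcases hs.eq_or_lt with rfl | hs
  · left
    simpa using hcs
  · right
    positivity

lemma arg_hankelRay_nonneg (hθ : 0 ≤ Real.sin θ) (hs : 0 ≤ s) : 0 ≤ arg (hankelRay θ c s) := by
  rw [arg_nonneg_iff, hankelRay_im]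
  positivity

lemma arg_hankelRay_le (hθ₀ : 0 < θ) (hθπ : θ < π) (hc : 0 < c) (hs : 0 ≤ s) :
    arg (hankelRay θ c s) ≤ θ := by
  have hsin := Real.sin_pos_of_pos_of_lt_pi hθ₀ hθπ
  by_contra! hlt
  have hne : hankelRay θ c s ≠ 0 :=
    slitPlane_ne_zero (hankelRay_mem_slitPlane hsin hs (by positivity))
  have hpos : 0 < Real.sin (arg (hankelRay θ c s) - θ) :=
    Real.sin_pos_of_pos_of_lt_pi (sub_pos.2 hlt) (by linarith [arg_le_pi (hankelRay θ c s)])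
  rw [Real.sin_sub, sin_arg, cos_arg hne, hankelRay_re, hankelRay_im, div_mul_eq_mul_div,
    div_mul_eq_mul_div, ← sub_div, div_pos_iff_of_pos_right (norm_pos_iff.2 hne)] at hpos
  nlinarith

end hankelRay

lemma isBigO_rpow_mul_exp_mul_rpow {β k : ℝ} (hβ : β < 1) (hk : 0 < k) (q A : ℝ) :
    (fun x : ℝ ↦ x ^ q * Real.exp (A * x ^ β)) =O[atTop] fun x ↦ Real.exp (k * x) := by
  have hrpow : (fun x : ℝ ↦ x ^ β) =o[atTop] (fun x : ℝ ↦ x) := by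
    refine isLittleO_of_tendsto' ?_ ((tendsto_rpow_neg_atTop (sub_pos.2 hβ)).congr' ?_)
    · filter_upwards [eventually_ne_atTop 0] with x hx hx0 using absurd hx0 hx
    · filter_upwards [eventually_ne_atTop 0] with x hx
      rw [neg_sub, Real.rpow_sub_one hx]
  have hlog : (fun x : ℝ ↦ q * Real.log x + A * x ^ β) =o[atTop] (fun x : ℝ ↦ x) :=
    (Real.isLittleO_log_id_atTop.const_mul_left q).add (hrpow.const_mul_left A)
  refine .of_bound 1 ?_
  filter_upwards [hlog.bound hk, eventually_gt_atTop 0] with x hx hx0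
  rw [Real.rpow_def_of_pos hx0 q, ← Real.exp_add, one_mul, Real.norm_of_nonneg (by positivity),
    Real.norm_of_nonneg (by positivity), Real.exp_le_exp, mul_comm (Real.log x)]
  rw [Real.norm_of_nonneg hx0.le] at hx
  exact (le_abs_self _).trans hx

lemma isBigO_exp_neg_mul_rpow_mul_exp {x : ℝ → ℝ} {κ β C : ℝ} (hκ : 0 < κ) (hβ : β < 1)
    (hx : Tendsto x atTop atTop) (hxC : ∀ᶠ s in atTop, x s ≤ C + s) (q A : ℝ) :
    (fun s ↦ Real.exp (-(κ * s)) * (x s ^ q * Real.exp (A * x s ^ β))) =O[atTop]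
      fun s ↦ Real.exp (-(κ / 2) * s) := by
  have hgrowth := (isBigO_rpow_mul_exp_mul_rpow hβ (half_pos hκ) q A).comp_tendsto hx
  refine ((isBigO_refl (fun s ↦ Real.exp (-(κ * s))) atTop).mul hgrowth).trans ?_
  refine .of_bound (Real.exp (κ / 2 * C)) ?_
  filter_upwards [hxC] with s hs
  rw [Function.comp_apply, ← Real.exp_add, Real.norm_of_nonneg (by positivity),
    Real.norm_of_nonneg (by positivity), ← Real.exp_add, Real.exp_le_exp]
  nlinarith

/-- The integrand `e ^ σ * σ ^ (-a)` of Hankel's integral for `1 / Γ(a)`. -/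
noncomputable def hankelIntegrand (a : ℝ) (σ : ℂ) : ℂ :=
  exp σ * σ ^ (-(a : ℂ))

section hankelIntegrand

variable {a θ c s : ℝ} {σ : ℂ}

lemma norm_hankelIntegrand : ‖hankelIntegrand a σ‖ = Real.exp σ.re * ‖σ‖ ^ (-a) := by
  rw [hankelIntegrand, norm_mul, norm_exp, ← ofReal_neg, norm_cpow_real]

lemma measurable_hankelIntegrand : Measurable (hankelIntegrand a) := by
  unfold hankelIntegrand
  fun_prop

lemma hankelIntegrand_mul_cpow (hσ : σ ≠ 0) (b : ℝ) :
    hankelIntegrand a σ * σ ^ (b : ℂ) = hankelIntegrand (a - b) σ := by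
  rw [hankelIntegrand, hankelIntegrand, mul_assoc, ← cpow_add _ _ hσ]
  congr 2
  push_cast
  ring

lemma im_hankelIntegrand_ofReal {x : ℝ} (hx : 0 ≤ x) : (hankelIntegrand a x).im = 0 := by
  rw [hankelIntegrand, ← ofReal_neg, ← ofReal_cpow hx, ← ofReal_exp, ← ofReal_mul, ofReal_im]

lemma hasDerivAt_hankelIntegrand (hσ : σ ∈ slitPlane) :
    HasDerivAt (hankelIntegrand a) (hankelIntegrand a σ - a * hankelIntegrand (a + 1) σ) σ := by
  refine ((hasDerivAt_exp σ).mul ((hasDerivAt_id σ).cpow_const (c := -(a : ℂ))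
    hσ)).congr_deriv ?_
  simp only [hankelIntegrand, id, ofReal_add, ofReal_one, neg_add']
  ring

lemma continuousOn_hankelIntegrand : ContinuousOn (hankelIntegrand a) slitPlane :=
  fun _ hσ ↦ (hasDerivAt_hankelIntegrand hσ).continuousAt.continuousWithinAt

lemma isBigO_hankelIntegrand_hankelRay_mul_exp {β : ℝ} (hsin : 0 < Real.sin θ)
    (hcos : Real.cos θ < 0) (hβ : β < 1) (A : ℝ) :
    (fun s ↦ ‖hankelIntegrand a (hankelRay θ c s)‖ * Real.exp (A * ‖hankelRay θ c s‖ ^ β))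
      =O[atTop] fun s ↦ Real.exp (-(-Real.cos θ / 2) * s) := by
  have hle : ∀ᶠ s in atTop, ‖hankelRay θ c s‖ ≤ |c| + s :=
    (eventually_ge_atTop 0).mono fun s hs ↦ norm_hankelRay_le hs
  refine ((isBigO_exp_neg_mul_rpow_mul_exp (neg_pos.2 hcos) hβ (tendsto_norm_hankelRay hsin) hle
    (-a) A).const_mul_left (Real.exp c)).congr_left fun s ↦ ?_
  rw [norm_hankelIntegrand, hankelRay_re, Real.exp_add, neg_mul, neg_neg, mul_comm s]
  ring

lemma continuousOn_hankelIntegrand_hankelRay (hθ : 0 < Real.sin θ) (hc : 0 < c) :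
    ContinuousOn (fun s ↦ hankelIntegrand a (hankelRay θ c s)) (Ici 0) :=
  continuousOn_hankelIntegrand.comp (fun _ _ ↦ hasDerivAt_hankelRay.continuousAt.continuousWithinAt)
    fun _ hs ↦ hankelRay_mem_slitPlane hθ hs (add_pos_of_pos_of_nonneg hc hs)

lemma integrableOn_norm_hankelIntegrand_hankelRay_mul_exp {β : ℝ} (hsin : 0 < Real.sin θ)
    (hcos : Real.cos θ < 0) (hc : 0 < c) (hβ : β < 1) (A : ℝ) :
    IntegrableOn (fun s ↦ ‖hankelIntegrand a (hankelRay θ c s)‖ *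
      Real.exp (A * ‖hankelRay θ c s‖ ^ β)) (Ioi 0) := by
  refine integrable_of_isBigO_exp_neg (b := -Real.cos θ / 2) (by linarith) ?_
    (isBigO_hankelIntegrand_hankelRay_mul_exp hsin hcos hβ A)
  have hnorm : ContinuousOn (fun s ↦ ‖hankelRay θ c s‖) (Ici 0) :=
    fun _ _ ↦ hasDerivAt_hankelRay.continuousAt.norm.continuousWithinAt
  refine (continuousOn_hankelIntegrand_hankelRay hsin hc).norm.mul
    ((hnorm.rpow_const fun s hs ↦ .inl ?_).const_mul A).rexp
  exact norm_ne_zero_iff.2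
    (slitPlane_ne_zero (hankelRay_mem_slitPlane hsin hs (add_pos_of_pos_of_nonneg hc hs)))

lemma integrableOn_hankelIntegrand_hankelRay (hsin : 0 < Real.sin θ) (hcos : Real.cos θ < 0)
    (hc : 0 < c) : IntegrableOn (fun s ↦ hankelIntegrand a (hankelRay θ c s)) (Ioi 0) := by
  refine (integrable_norm_iff
    (measurable_hankelIntegrand.comp measurable_hankelRay).aestronglyMeasurable).1 ?_
  simpa [IntegrableOn] using
    integrableOn_norm_hankelIntegrand_hankelRay_mul_exp (a := a) hsin hcos hc one_pos 0

lemma tendsto_hankelIntegrand_hankelRay (hsin : 0 < Real.sin θ) (hcos : Real.cos θ < 0) :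
    Tendsto (fun s ↦ hankelIntegrand a (hankelRay θ c s)) atTop (𝓝 0) := by
  have hO : (fun s ↦ ‖hankelIntegrand a (hankelRay θ c s)‖) =O[atTop]
      fun s ↦ Real.exp (-(-Real.cos θ / 2) * s) := by
    simpa using isBigO_hankelIntegrand_hankelRay_mul_exp (a := a) (c := c) hsin hcos one_pos 0
  refine tendsto_zero_iff_norm_tendsto_zero.2 (hO.trans_tendsto ?_)
  have hneg : -(-Real.cos θ / 2) < 0 := by linarith
  exact Real.tendsto_exp_atBot.comp (tendsto_id.const_mul_atTop_of_neg hneg)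

end hankelIntegrand

/-- The contour integral `∫ f(σ) dσ` along the ray `hankelRay θ c`, directed away from `c`. -/
noncomputable def rayIntegral (θ c : ℝ) (f : ℂ → ℂ) : ℂ :=
  exp (θ * I) * ∫ s in Ioi (0 : ℝ), f (hankelRay θ c s)

lemma rayIntegral_deriv_hankelIntegrand {a θ c : ℝ} (hsin : 0 < Real.sin θ)
    (hcos : Real.cos θ < 0) (hc : 0 < c) :
    rayIntegral θ c (fun σ ↦ hankelIntegrand a σ - a * hankelIntegrand (a + 1) σ) =
      -hankelIntegrand a c := by
  have hG (b : ℝ) := integrableOn_hankelIntegrand_hankelRay (a := b) hsin hcos hc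
  rw [rayIntegral, ← integral_const_mul, ← zero_sub, ← hankelRay_zero_right (θ := θ) (c := c)]
  refine integral_Ioi_of_hasDerivAt_of_tendsto' (fun s hs ↦ ?_)
    (((hG a).fun_sub ((hG (a + 1)).const_mul _)).const_mul _)
    (tendsto_hankelIntegrand_hankelRay hsin hcos)
  rw [mul_comm]
  exact (hasDerivAt_hankelIntegrand (hankelRay_mem_slitPlane hsin hs
    (add_pos_of_pos_of_nonneg hc hs))).comp s hasDerivAt_hankelRay

lemma im_rayIntegral_hankelIntegrand_eq_mul_add_one {a θ c : ℝ} (hsin : 0 < Real.sin θ)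
    (hcos : Real.cos θ < 0) (hc : 0 < c) :
    (rayIntegral θ c (hankelIntegrand a)).im =
      a * (rayIntegral θ c (hankelIntegrand (a + 1))).im := by
  have hG (b : ℝ) := integrableOn_hankelIntegrand_hankelRay (a := b) hsin hcos hc
  have hparts := congrArg im (rayIntegral_deriv_hankelIntegrand (a := a) hsin hcos hc)
  rw [rayIntegral, integral_sub (hG a) ((hG (a + 1)).const_mul _), integral_const_mul, mul_sub,
    mul_left_comm, sub_im, im_ofReal_mul, neg_im, im_hankelIntegrand_ofReal hc.le, neg_zero,
    sub_eq_zero] at hparts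
  exact hparts

lemma exists_integrable_bound_hankelIntegrand_hankelRay {a θ : ℝ} (hcos : Real.cos θ < 0)
    (ha : a ≤ 0) : ∃ B : ℝ → ℝ, IntegrableOn B (Ioi 0) ∧
      ∀ c ∈ Icc (0 : ℝ) 1, ∀ s ∈ Ioi (0 : ℝ), ‖hankelIntegrand a (hankelRay θ c s)‖ ≤ B s := by
  refine ⟨fun s ↦ Real.exp 1 * (Real.exp (-(-Real.cos θ * s)) * (1 + s) ^ (-a)),
    Integrable.const_mul ?_ _, fun c hc s (hs : 0 < s) ↦ ?_⟩
  · refine integrable_of_isBigO_exp_neg (b := -Real.cos θ / 2) (by linarith) ?_ ?_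
    · exact (by fun_prop : Continuous fun s : ℝ ↦ Real.exp (-(-Real.cos θ * s))).continuousOn.mul
        ((by fun_prop : Continuous fun s : ℝ ↦ 1 + s).continuousOn.rpow_const
          fun s _ ↦ .inr (neg_nonneg.2 ha))
    · simpa using isBigO_exp_neg_mul_rpow_mul_exp (neg_pos.2 hcos) one_pos
        (tendsto_atTop_add_const_left atTop 1 tendsto_id) (.of_forall fun s ↦ le_rfl) (-a) 0
  · rw [norm_hankelIntegrand, hankelRay_re, Real.exp_add, mul_assoc, mul_comm s]
    have hnorm : ‖hankelRay θ c s‖ ≤ 1 + s :=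
      (norm_hankelRay_le hs.le).trans (by rw [abs_of_nonneg hc.1]; linarith [hc.2])
    simp only [neg_mul, neg_neg]
    gcongr
    · exact hc.2
    · linarith

lemma hasDerivAt_rayIntegral_hankelIntegrand {a θ c : ℝ} (hsin : 0 < Real.sin θ)
    (hcos : Real.cos θ < 0) (ha : a ≤ -1) (hc : c ∈ Ioo (0 : ℝ) 1) :
    HasDerivAt (fun c ↦ rayIntegral θ c (hankelIntegrand a)) (-hankelIntegrand a c) c := by
  obtain ⟨B, hB, hGB⟩ :=
    exists_integrable_bound_hankelIntegrand_hankelRay hcos (show a ≤ 0 by linarith)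
  obtain ⟨B', hB', hGB'⟩ :=
    exists_integrable_bound_hankelIntegrand_hankelRay hcos (show a + 1 ≤ 0 by linarith)
  rw [← rayIntegral_deriv_hankelIntegrand hsin hcos hc.1]
  have hmeas (b c : ℝ) : Measurable fun s ↦ hankelIntegrand b (hankelRay θ c s) :=
    measurable_hankelIntegrand.comp measurable_hankelRay
  refine ((hasDerivAt_integral_of_dominated_loc_of_deriv_le
    (F := fun c s ↦ hankelIntegrand a (hankelRay θ c s))
    (F' := fun c s ↦ hankelIntegrand a (hankelRay θ c s)
      - a * hankelIntegrand (a + 1) (hankelRay θ c s))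
    (bound := fun s ↦ B s + ‖(a : ℂ)‖ * B' s) (Ioo_mem_nhds hc.1 hc.2)
    (.of_forall fun c ↦ (hmeas a c).aestronglyMeasurable)
    (integrableOn_hankelIntegrand_hankelRay hsin hcos hc.1)
    ((hmeas a c).sub ((hmeas (a + 1) c).const_mul _)).aestronglyMeasurable ?_
    (hB.add (hB'.const_mul _)) ?_).2).const_mul _
  · filter_upwards [ae_restrict_mem measurableSet_Ioi] with s hs c' hc'
    refine (norm_sub_le _ _).trans ?_
    rw [norm_mul]
    gcongr
    exacts [hGB c' (Ioo_subset_Icc_self hc') s hs, hGB' c' (Ioo_subset_Icc_self hc') s hs]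
  · filter_upwards [ae_restrict_mem measurableSet_Ioi] with s hs c' hc'
    have hslit := hankelRay_mem_slitPlane hsin (le_of_lt hs) (add_pos hc'.1 hs)
    simpa only [mul_one] using!
      (hasDerivAt_hankelIntegrand (a := a) hslit).comp c' hasDerivAt_hankelRay_vertex

lemma continuousOn_rayIntegral_hankelIntegrand {a θ : ℝ} (hsin : 0 < Real.sin θ)
    (hcos : Real.cos θ < 0) (ha : a ≤ 0) :
    ContinuousOn (fun c ↦ rayIntegral θ c (hankelIntegrand a)) (Icc 0 1) := by
  obtain ⟨B, hB, hGB⟩ := exists_integrable_bound_hankelIntegrand_hankelRay (θ := θ) hcos ha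
  refine (continuousOn_of_dominated (bound := B) (fun c _ ↦
    (measurable_hankelIntegrand.comp measurable_hankelRay).aestronglyMeasurable) (fun c hc ↦ ?_)
    hB ?_).const_mul _
  · filter_upwards [ae_restrict_mem measurableSet_Ioi] with s hs using hGB c hc s hs
  · filter_upwards [ae_restrict_mem measurableSet_Ioi] with s hs
    exact continuousOn_hankelIntegrand.comp
      (fun c _ ↦ hasDerivAt_hankelRay_vertex.continuousAt.continuousWithinAt)
      fun c hc ↦ hankelRay_mem_slitPlane hsin (le_of_lt hs) (add_pos_of_nonneg_of_pos hc.1 hs)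

lemma im_rayIntegral_one_eq_im_rayIntegral_zero {a θ : ℝ} (hsin : 0 < Real.sin θ)
    (hcos : Real.cos θ < 0) (ha : a ≤ -1) :
    (rayIntegral θ 1 (hankelIntegrand a)).im = (rayIntegral θ 0 (hankelIntegrand a)).im := by
  have hcont := continuous_im.comp_continuousOn
    (continuousOn_rayIntegral_hankelIntegrand hsin hcos (show a ≤ 0 by linarith))
  have hderiv (c : ℝ) (hc : c ∈ Ioo (0 : ℝ) 1) :
      HasDerivAt (fun c ↦ (rayIntegral θ c (hankelIntegrand a)).im) 0 c := by
    have h := imCLM.hasFDerivAt.comp_hasDerivAt c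
      (hasDerivAt_rayIntegral_hankelIntegrand hsin hcos ha hc)
    simpa only [imCLM_apply, neg_im, im_hankelIntegrand_ofReal hc.1.le, neg_zero] using! h
  obtain ⟨c, -, hc⟩ := exists_hasDerivAt_eq_slope _ _ one_pos hcont hderiv
  rw [sub_zero, div_one] at hc
  exact sub_eq_zero.1 hc.symm

lemma ofReal_mul_exp_mul_I_cpow {s θ : ℝ} (hs : 0 < s) (hθ : θ ∈ Ioc (-π) π) (z : ℂ) :
    (s * exp (θ * I)) ^ z = (s : ℂ) ^ z * exp (θ * I * z) := by
  have hs' : (s : ℂ) ≠ 0 := ofReal_ne_zero.2 hs.ne'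
  rw [cpow_def_of_ne_zero (mul_ne_zero hs' (exp_ne_zero _)), cpow_def_of_ne_zero hs', ← exp_add,
    log_ofReal_mul hs (exp_ne_zero _), log_exp (by simpa using hθ.1) (by simpa using hθ.2),
    ← ofReal_log hs.le, add_mul]

lemma sin_pi_mul_mul_Gamma {x : ℝ} (hx : 0 < x) :
    Real.sin (π * x) * Real.Gamma x = π / Real.Gamma (1 - x) := by
  have hrefl := congrArg (·⁻¹) (Real.Gamma_mul_Gamma_one_sub x)
  have hΓ := (Real.Gamma_pos_of_pos hx).ne'
  simp only [mul_inv, inv_div] at hrefl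
  rw [div_eq_mul_inv, ← mul_inv_cancel_left₀ hΓ (Real.Gamma (1 - x))⁻¹, hrefl]
  field_simp

lemma rayIntegral_zero_hankelIntegrand {a θ : ℝ} (hθ : θ ∈ Ioo (π / 2) π) (ha : a < 1) :
    rayIntegral θ 0 (hankelIntegrand a) = Real.Gamma (1 - a) * exp ((π * (1 - a) : ℝ) * I) := by
  have hcos := cos_neg_of_mem_Ioo_pi_div_two_pi hθ
  have hrotate : -exp (θ * I) = (1 : ℝ) * exp ((θ - π : ℝ) * I) := by
    push_cast
    rw [sub_mul, exp_sub, exp_pi_mul_I, div_neg, div_one, one_mul]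
  have hintegrand (s : ℝ) (hs : s ∈ Ioi 0) : hankelIntegrand a (hankelRay θ 0 s) =
      exp (-(θ * I * a)) * ((s : ℂ) ^ ((1 - a : ℂ) - 1) * exp (-(-exp (θ * I) * s))) := by
    rw [hankelIntegrand, hankelRay, ofReal_zero, zero_add,
      ofReal_mul_exp_mul_I_cpow hs ⟨by linarith [hθ.1, Real.pi_pos], hθ.2.le⟩, mul_neg,
      sub_sub_cancel_left, neg_mul, neg_neg, mul_comm (s : ℂ)]
    ring
  rw [rayIntegral, setIntegral_congr_fun measurableSet_Ioi hintegrand, integral_const_mul,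
    integral_cpow_mul_exp_neg_mul_Ioi_of_re_pos (by simpa using ha)
      (by simpa [exp_ofReal_mul_I_re] using hcos),
    hrotate, ofReal_mul_exp_mul_I_cpow one_pos
      ⟨by linarith [hθ.1, Real.pi_pos], by linarith [hθ.2, Real.pi_pos]⟩,
    ofReal_one, one_cpow, one_mul, ← ofReal_one, ← ofReal_sub, Gamma_ofReal, ← mul_assoc,
    ← mul_assoc, ← exp_add, ← exp_add, mul_comm]
  congr 2
  push_cast
  ring

lemma norm_hankelIntegrand_le_add {a b₁ b₂ : ℝ} {σ : ℂ} (hσ : σ ≠ 0) (h₁ : b₁ ≤ a) (h₂ : a ≤ b₂) :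
    ‖hankelIntegrand a σ‖ ≤ ‖hankelIntegrand b₁ σ‖ + ‖hankelIntegrand b₂ σ‖ := by
  have hpos := norm_pos_iff.2 hσ
  simp only [norm_hankelIntegrand, ← mul_add]
  gcongr
  rcases le_total 1 ‖σ‖ with hσ1 | hσ1
  · exact (Real.rpow_le_rpow_of_exponent_le hσ1 (neg_le_neg h₁)).trans
      (le_add_of_nonneg_right (by positivity))
  · exact (Real.rpow_le_rpow_of_exponent_ge hpos hσ1 (neg_le_neg h₂)).trans
      (le_add_of_nonneg_left (by positivity))

lemma continuous_rayIntegral_hankelIntegrand {θ c : ℝ} (hsin : 0 < Real.sin θ)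
    (hcos : Real.cos θ < 0) (hc : 0 < c) :
    Continuous fun a ↦ rayIntegral θ c (hankelIntegrand a) := by
  have hG (b : ℝ) := (integrableOn_hankelIntegrand_hankelRay (a := b) hsin hcos hc).norm
  have hne {s : ℝ} (hs : s ∈ Ioi 0) : hankelRay θ c s ≠ 0 :=
    slitPlane_ne_zero (hankelRay_mem_slitPlane hsin (le_of_lt hs) (add_pos hc hs))
  refine continuous_const.mul (continuous_iff_continuousAt.2 fun a ↦
    continuousAt_of_dominated (.of_forall fun b ↦
      (measurable_hankelIntegrand.comp measurable_hankelRay).aestronglyMeasurable) ?_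
      ((hG (a - 1)).add (hG (a + 1))) ?_)
  · filter_upwards [Ioo_mem_nhds (sub_one_lt a) (lt_add_one a)] with b hb
    filter_upwards [ae_restrict_mem measurableSet_Ioi] with s hs
    exact norm_hankelIntegrand_le_add (hne hs) hb.1.le hb.2.le
  · filter_upwards [ae_restrict_mem measurableSet_Ioi] with s hs
    exact continuousAt_const.mul ((continuousAt_const_cpow (hne hs)).comp
      (f := fun b : ℝ ↦ -(b : ℂ)) (by fun_prop))

lemma hankel_formula_add_one {a θ : ℝ} (hsin : 0 < Real.sin θ) (hcos : Real.cos θ < 0)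
    (ha : a ≠ 0) (h : (rayIntegral θ 1 (hankelIntegrand a)).im = π / Real.Gamma a) :
    (rayIntegral θ 1 (hankelIntegrand (a + 1))).im = π / Real.Gamma (a + 1) := by
  rw [Real.Gamma_add_one ha, mul_comm a, ← div_div, ← h,
    im_rayIntegral_hankelIntegrand_eq_mul_add_one (a := a) hsin hcos one_pos,
    mul_div_cancel_left₀ _ ha]

lemma hankel_formula_of_lt_one {a θ : ℝ} (hθ : θ ∈ Ioo (π / 2) π) (ha : a < 1) :
    (rayIntegral θ 1 (hankelIntegrand a)).im = π / Real.Gamma a := by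
  have hcos := cos_neg_of_mem_Ioo_pi_div_two_pi hθ
  have hsin := sin_pos_of_mem_Ioo_pi_div_two_pi hθ
  have hbase : (rayIntegral θ 1 (hankelIntegrand (a - 2))).im = π / Real.Gamma (a - 2) := by
    rw [im_rayIntegral_one_eq_im_rayIntegral_zero hsin hcos (by linarith),
      rayIntegral_zero_hankelIntegrand hθ (by linarith), im_ofReal_mul, exp_ofReal_mul_I_im,
      mul_comm, sin_pi_mul_mul_Gamma (by linarith), sub_sub_cancel]
  have hstep := hankel_formula_add_one hsin hcos (by linarith)
    (hankel_formula_add_one hsin hcos (by linarith) hbase)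
  rwa [show a - 2 + 1 + 1 = a by ring] at hstep

lemma continuous_inv_Gamma : Continuous fun a : ℝ ↦ (Real.Gamma a)⁻¹ := by
  refine (continuous_re.comp (differentiable_one_div_Gamma.continuous.comp
    continuous_ofReal)).congr fun a ↦ ?_
  simp [Gamma_ofReal, ← ofReal_inv]

-- The recursion `Γ(a + 1) = a Γ(a)` says nothing at `a = 0`, so `a = 1` is reached by continuity.
theorem hankel_formula {θ : ℝ} (hθ : θ ∈ Ioo (π / 2) π) (a : ℝ) :
    (rayIntegral θ 1 (hankelIntegrand a)).im = π / Real.Gamma a := by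
  have hcos := cos_neg_of_mem_Ioo_pi_div_two_pi hθ
  have hsin := sin_pos_of_mem_Ioo_pi_div_two_pi hθ
  have hle_one : EqOn (fun a ↦ (rayIntegral θ 1 (hankelIntegrand a)).im)
      (fun a ↦ π / Real.Gamma a) (Iic 1) := by
    rw [← closure_Iio]
    exact EqOn.closure (fun a ha ↦ hankel_formula_of_lt_one hθ ha)
      (continuous_im.comp (continuous_rayIntegral_hankelIntegrand hsin hcos one_pos))
      (continuous_const.mul continuous_inv_Gamma)
  have hle_nat (n : ℕ) : ∀ a : ℝ, a ≤ n + 1 →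
      (rayIntegral θ 1 (hankelIntegrand a)).im = π / Real.Gamma a := by
    induction n with
    | zero => exact fun a ha ↦ hle_one (by simpa using ha)
    | succ n ih =>
      intro a ha
      rcases le_or_gt a 1 with ha1 | ha1
      · exact hle_one ha1
      · have hprev := ih (a - 1) (by push_cast at ha; linarith)
        simpa using hankel_formula_add_one hsin hcos (sub_pos.2 ha1).ne' hprev
  obtain ⟨n, hn⟩ := exists_nat_ge a
  exact hle_nat n a (by linarith)

/-- The two-parameter Wright function `∑ zⁿ / (n! Γ(ρn + μ))`, of which the M-Wright function is
the case `ρ = -β`, `μ = 1 - β` at `-z`. Since `Real.Gamma` vanishes at its poles, division by it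
correctly yields the zeros of the reciprocal Gamma function. -/
noncomputable def wright (ρ μ z : ℝ) : ℝ :=
  ∑' n : ℕ, z ^ n / (n.factorial * Real.Gamma (ρ * n + μ))

lemma mWright_eq_wright (β z : ℝ) : mWright β z = wright (-β) (1 - β) (-z) := by
  simp only [mWright, wright, add_sub_assoc]

lemma hankelIntegrand_mul_cpow_mul_pow_div_factorial {β μ z : ℝ} {σ : ℂ} (hσ : σ ≠ 0) (n : ℕ) :
    hankelIntegrand μ σ * ((σ ^ (β : ℂ) * z) ^ n / n.factorial) =
      (z ^ n / n.factorial : ℝ) * hankelIntegrand (-β * n + μ) σ := by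
  rw [show -β * n + μ = μ - β * n by ring, ← hankelIntegrand_mul_cpow hσ, mul_pow, ← cpow_mul_nat]
  push_cast
  ring

-- Expand the exponential and integrate termwise; `β < 1` lets `exp σ.re` dominate.
lemma hasSum_rayIntegral_hankelIntegrand_mul_exp {β θ c : ℝ} (hsin : 0 < Real.sin θ)
    (hcos : Real.cos θ < 0) (hc : 0 < c) (hβ : β < 1) (μ z : ℝ) :
    HasSum (fun n : ℕ ↦ (z ^ n / n.factorial : ℝ) *
        rayIntegral θ c (hankelIntegrand (-β * n + μ)))
      (rayIntegral θ c fun σ ↦ hankelIntegrand μ σ * exp (σ ^ (β : ℂ) * z)) := by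
  have hne {s : ℝ} (hs : s ∈ Ioi 0) : hankelRay θ c s ≠ 0 :=
    slitPlane_ne_zero (hankelRay_mem_slitPlane hsin (le_of_lt hs) (add_pos hc hs))
  have hexp (x : ℝ) := Real.exp_eq_exp_ℝ ▸ NormedSpace.expSeries_div_hasSum_exp x
  have hcexp (x : ℂ) := exp_eq_exp_ℂ ▸ NormedSpace.expSeries_div_hasSum_exp x
  have hsum : HasSum
      (fun n : ℕ ↦ ∫ s in Ioi 0, (z ^ n / n.factorial : ℝ) *
        hankelIntegrand (-β * n + μ) (hankelRay θ c s))
      (∫ s in Ioi 0, hankelIntegrand μ (hankelRay θ c s) *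
        exp (hankelRay θ c s ^ (β : ℂ) * z)) := by
    refine hasSum_integral_of_dominated_convergence
      (fun n s ↦ ‖hankelIntegrand μ (hankelRay θ c s)‖ *
        ((|z| * ‖hankelRay θ c s‖ ^ β) ^ n / n.factorial))
      (fun n ↦ ((measurable_hankelIntegrand.comp measurable_hankelRay).const_mul
        _).aestronglyMeasurable) (fun n ↦ ?_)
      (.of_forall fun s ↦ ((hexp _).mul_left _).summable) ?_ ?_
    · filter_upwards [ae_restrict_mem measurableSet_Ioi] with s hs
      rw [← hankelIntegrand_mul_cpow_mul_pow_div_factorial (hne hs), norm_mul, norm_div, norm_pow,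
        norm_mul, norm_cpow_real, norm_real, Real.norm_eq_abs, mul_comm |z|, norm_natCast]
    · simpa only [((hexp _).mul_left _).tsum_eq] using!
        integrableOn_norm_hankelIntegrand_hankelRay_mul_exp (a := μ) hsin hcos hc hβ |z|
    · filter_upwards [ae_restrict_mem measurableSet_Ioi] with s hs
      simpa only [hankelIntegrand_mul_cpow_mul_pow_div_factorial (hne hs)] using
        (hcexp (hankelRay θ c s ^ (β : ℂ) * z)).mul_left (hankelIntegrand μ (hankelRay θ c s))
  simpa only [rayIntegral, integral_const_mul, mul_left_comm] using hsum.mul_left (exp (θ * I))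

lemma im_rayIntegral_hankelIntegrand_mul_exp {β θ : ℝ} (hθ : θ ∈ Ioo (π / 2) π) (hβ : β < 1)
    (μ z : ℝ) :
    (rayIntegral θ 1 fun σ ↦ hankelIntegrand μ σ * exp (σ ^ (β : ℂ) * z)).im =
      π * wright (-β) μ z := by
  have hsum := imCLM.hasSum (hasSum_rayIntegral_hankelIntegrand_mul_exp
    (sin_pos_of_mem_Ioo_pi_div_two_pi hθ) (cos_neg_of_mem_Ioo_pi_div_two_pi hθ) one_pos hβ μ z)
  rw [← imCLM_apply, ← hsum.tsum_eq, wright, ← tsum_mul_left]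
  refine tsum_congr fun n ↦ ?_
  rw [imCLM_apply, im_ofReal_mul, hankel_formula hθ, div_mul_div_comm,
    mul_div_assoc, mul_div_left_comm]

lemma exists_pos_le_re_cpow_hankelRay {β θ c : ℝ} (hβ : 0 ≤ β) (hθ : θ ∈ Ioo 0 π)
    (hβθ : β * θ < π / 2) (hc : 0 < c) :
    ∃ δ > 0, ∀ s, 0 ≤ s → δ ≤ (hankelRay θ c s ^ (β : ℂ)).re := by
  have hsin := Real.sin_pos_of_mem_Ioo hθ
  have hcos : 0 < Real.cos (β * θ) :=
    Real.cos_pos_of_mem_Ioo ⟨by linarith [mul_nonneg hβ hθ.1.le, Real.pi_pos], hβθ⟩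
  refine ⟨(c * Real.sin θ) ^ β * Real.cos (β * θ), by positivity, fun s hs ↦ ?_⟩
  have harg := arg_hankelRay_nonneg (c := c) hsin.le hs
  rw [cpow_ofReal_re, mul_comm _ β]
  gcongr
  · exact mul_sin_le_norm_hankelRay
  · exact Real.cos_le_cos_of_nonneg_of_le_pi (by positivity) (by linarith [Real.pi_pos])
      (by gcongr; exact arg_hankelRay_le hθ.1 hθ.2 hc hs)

lemma integral_cpow_mul_hankelIntegrand_mul_exp {β r : ℝ} {σ : ℂ} (hβ₀ : 0 ≤ β) (hβ₁ : β ≤ 1)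
    (hr : -1 < r) (hσ : σ ≠ 0) (hre : 0 < (σ ^ (β : ℂ)).re) (μ : ℝ) :
    ∫ τ in Ioi (0 : ℝ), (τ : ℂ) ^ (r : ℂ) * (hankelIntegrand μ σ * exp (-(σ ^ (β : ℂ) * τ))) =
      Real.Gamma (r + 1) * hankelIntegrand (μ + β * (r + 1)) σ := by
  have harg := neg_pi_lt_arg σ
  have harg' := arg_le_pi σ
  have hpow : (σ ^ (β : ℂ)) ^ (-(r + 1 : ℂ)) = σ ^ ((-(β * (r + 1)) : ℝ) : ℂ) := by
    rw [← cpow_mul _ (by rw [im_mul_ofReal, log_im]; nlinarith [Real.pi_pos])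
      (by rw [im_mul_ofReal, log_im]; nlinarith [Real.pi_pos])]
    push_cast
    ring_nf
  have hgamma := integral_cpow_mul_exp_neg_mul_Ioi_of_re_pos (a := (r + 1 : ℂ))
    (by simpa using neg_lt_iff_pos_add.1 hr) hre
  simp only [mul_left_comm _ (hankelIntegrand μ σ)]
  rw [add_sub_cancel_right, hpow] at hgamma
  rw [integral_const_mul, hgamma, ← mul_assoc, hankelIntegrand_mul_cpow hσ,
    sub_neg_eq_add, ← Gamma_ofReal, mul_comm]
  push_cast
  rfl

lemma integrable_cpow_mul_hankelIntegrand_mul_exp {β θ r : ℝ} (hβ : 0 ≤ β)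
    (hθ : θ ∈ Ioo (π / 2) π) (hβθ : β * θ < π / 2) (hr : -1 < r) (μ : ℝ) :
    Integrable (fun x : ℝ × ℝ ↦ (x.1 : ℂ) ^ (r : ℂ) * (hankelIntegrand μ (hankelRay θ 1 x.2) *
        exp (-(hankelRay θ 1 x.2 ^ (β : ℂ) * x.1))))
      ((volume.restrict (Ioi 0)).prod (volume.restrict (Ioi 0))) := by
  obtain ⟨δ, hδ, hre⟩ := exists_pos_le_re_cpow_hankelRay hβ
    ⟨Real.pi_div_two_pos.trans hθ.1, hθ.2⟩ hβθ one_pos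
  have hτ : IntegrableOn (fun τ : ℝ ↦ (τ : ℂ) ^ (r : ℂ) * exp (-(δ * τ))) (Ioi 0) := by
    simpa using integrableOn_cpow_mul_exp_neg_mul_Ioi (a := r + 1) (ζ := δ)
      (by simpa using neg_lt_iff_pos_add.1 hr) (by simpa using hδ)
  have hs := integrableOn_hankelIntegrand_hankelRay (a := μ)
    (sin_pos_of_mem_Ioo_pi_div_two_pi hθ) (cos_neg_of_mem_Ioo_pi_div_two_pi hθ) one_pos
  have hray : Measurable fun x : ℝ × ℝ ↦ hankelRay θ 1 x.2 :=
    measurable_hankelRay.comp measurable_snd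
  refine (Integrable.mul_prod hτ hs).mono (((by fun_prop : Measurable _).mul
    ((measurable_hankelIntegrand.comp hray).mul (by fun_prop))).aestronglyMeasurable) ?_
  rw [Measure.prod_restrict]
  filter_upwards [ae_restrict_mem (measurableSet_Ioi.prod measurableSet_Ioi)] with x hx
  have hx₁ : 0 < x.1 := hx.1
  have hx₂ : δ ≤ (hankelRay θ 1 x.2 ^ (β : ℂ)).re := hre x.2 (le_of_lt hx.2)
  rw [norm_mul, norm_mul, norm_mul, norm_mul, mul_left_comm, mul_comm _ ‖hankelIntegrand _ _‖,
    norm_exp_neg_mul_ofReal, norm_exp_neg_mul_ofReal, ofReal_re]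
  gcongr

lemma integral_cpow_mul_rayIntegral {β θ r : ℝ} (hβ₀ : 0 ≤ β) (hβ₁ : β ≤ 1)
    (hθ : θ ∈ Ioo (π / 2) π) (hβθ : β * θ < π / 2) (hr : -1 < r) (μ : ℝ) :
    ∫ τ in Ioi (0 : ℝ), (τ : ℂ) ^ (r : ℂ) *
        rayIntegral θ 1 (fun σ ↦ hankelIntegrand μ σ * exp (-(σ ^ (β : ℂ) * τ))) =
      Real.Gamma (r + 1) * rayIntegral θ 1 (hankelIntegrand (μ + β * (r + 1))) := by
  obtain ⟨δ, hδ, hre⟩ := exists_pos_le_re_cpow_hankelRay hβ₀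
    ⟨Real.pi_div_two_pos.trans hθ.1, hθ.2⟩ hβθ one_pos
  have hslit {s : ℝ} (hs : s ∈ Ioi 0) : hankelRay θ 1 s ∈ slitPlane :=
    hankelRay_mem_slitPlane (sin_pos_of_mem_Ioo_pi_div_two_pi hθ) (le_of_lt hs)
      (add_pos one_pos hs)
  simp only [rayIntegral, mul_left_comm _ (exp (θ * I)), ← integral_const_mul (_ ^ _)]
  rw [integral_const_mul,
    integral_integral_swap (integrable_cpow_mul_hankelIntegrand_mul_exp hβ₀ hθ hβθ hr μ),
    setIntegral_congr_fun measurableSet_Ioi fun s hs ↦ integral_cpow_mul_hankelIntegrand_mul_exp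
      hβ₀ hβ₁ hr (slitPlane_ne_zero (hslit hs)) (hδ.trans_le (hre s (le_of_lt hs))) μ,
    integral_const_mul]

lemma integrableOn_cpow_mul_rayIntegral {β θ r : ℝ} (hβ : 0 ≤ β)
    (hθ : θ ∈ Ioo (π / 2) π) (hβθ : β * θ < π / 2) (hr : -1 < r) (μ : ℝ) :
    IntegrableOn (fun τ : ℝ ↦ (τ : ℂ) ^ (r : ℂ) *
      rayIntegral θ 1 fun σ ↦ hankelIntegrand μ σ * exp (-(σ ^ (β : ℂ) * τ))) (Ioi 0) := by
  simp only [rayIntegral, mul_left_comm _ (exp (θ * I)), ← integral_const_mul (_ ^ _)]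
  exact (integrable_cpow_mul_hankelIntegrand_mul_exp hβ hθ hβθ hr μ).integral_prod_left.const_mul _

theorem mWright_moments_general (β : ℝ) (hβ₀ : 0 ≤ β) (hβ₁ : β < 1) (μ r : ℝ) (hr : -1 < r) :
    ∫ τ in Ioi (0 : ℝ), τ ^ r * wright (-β) μ (-τ) =
      Real.Gamma (r + 1) / Real.Gamma (μ + β * (r + 1)) := by
  -- Any `θ` with `π / 2 < θ < min π (π / (2 * β))` would do.
  obtain ⟨θ, hθ, hβθ⟩ : ∃ θ ∈ Ioo (π / 2) π, β * θ < π / 2 :=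
    ⟨(3 - β) / 4 * π, ⟨by nlinarith [Real.pi_pos], by nlinarith [Real.pi_pos]⟩, by
      nlinarith [mul_pos Real.pi_pos (mul_pos (sub_pos.2 hβ₁) (show 0 < 2 - β by linarith))]⟩
  have hwright (τ : ℝ) (hτ : τ ∈ Ioi 0) : π * (τ ^ r * wright (-β) μ (-τ)) = ((τ : ℂ) ^ (r : ℂ) *
      rayIntegral θ 1 fun σ ↦ hankelIntegrand μ σ * exp (-(σ ^ (β : ℂ) * τ))).im := by
    have him := im_rayIntegral_hankelIntegrand_mul_exp hθ hβ₁ μ (-τ)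
    simp only [ofReal_neg, mul_neg] at him
    rw [← ofReal_cpow (le_of_lt hτ), im_ofReal_mul, him, mul_left_comm]
  have hπ : π * ∫ τ in Ioi (0 : ℝ), τ ^ r * wright (-β) μ (-τ) =
      π * (Real.Gamma (r + 1) / Real.Gamma (μ + β * (r + 1))) := by
    rw [← integral_const_mul, setIntegral_congr_fun measurableSet_Ioi hwright]
    refine (imCLM.integral_comp_comm
      (integrableOn_cpow_mul_rayIntegral hβ₀ hθ hβθ hr μ)).trans ?_
    rw [integral_cpow_mul_rayIntegral hβ₀ hβ₁.le hθ hβθ hr, imCLM_apply, im_ofReal_mul,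
      hankel_formula hθ, mul_div_left_comm]
  exact mul_left_cancel₀ Real.pi_ne_zero hπ

end

/-- For `0 < β < 1` and `r > -1`, the moments of the M-Wright function satisfy
`∫_0^∞ τ^r M_β(τ) dτ = Γ(r+1)/Γ(βr+1)`. -/
theorem mWright_moments (β : ℝ) (hβ₀ : 0 < β) (hβ₁ : β < 1) (r : ℝ) (hr : -1 < r) :
    ∫ τ in Set.Ioi (0 : ℝ), τ ^ r * mWright β τ =
      Real.Gamma (r + 1) / Real.Gamma (β * r + 1) := by
  simp only [mWright_eq_wright, mWright_moments_general β hβ₀.le hβ₁ (1 - β) r hr]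
  ring_nf
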